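/- arXiv:1909.02748 — 2 statements merged into one kernel-verified Lean document; each statement's English description precedes it below -/
import Mathlib

section
/- Let (M_{ij}), for i ∈ Fin m₁ and j ∈ Fin n₁, be an array of m₂×n₂ complex matrices whose linear span has dimension s (so the associated bipartite matrix M has Schmidt rank s), where s ≤ n₁. Suppose there exists a row index i₀ such that s of the blocks M_{i₀,1}, …, M_{i₀,n₁} are linearly independent. Then rank(M) ≤ s · rank(M^Γ). -/
/-!
View the blocks as a tensor `ψ` with four legs `A, B, C, D`: block row, row inside a block, block
column, column inside a block. The rank of `M` is the rank of the flattening `AB|CD`, the Schmidt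
rank is that of `BD|AC`, and the rank of the partial transpose is that of `BC|AD`. All three are
multiplicative under tensor powers, so it suffices to prove
`rank AB|CD ≤ rank BD|AC * rank BC|AD` for `ψ^{⊗n}` up to a factor polynomial in `n`.

Such a factor pays for cutting the legs `A` and `B` of `ψ^{⊗n}` by minimal projections `P`, `Q` of
the algebra of permutation-invariant matrices, whose dimension is polynomial in `n`. After the cut
`rank AB|CD ≤ rank P * rank Q`. On the other hand, the marginal on `A` is then a multiple of `P`,
and the range projections of `BD|AC` and `BC|AD` have partial traces on `B` that are multiples of
`Q`, so that a Cauchy–Schwarz estimate of the trace of the marginal on `A` becomes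
`rank P * rank Q ≤ rank BD|AC * rank BC|AD`.
-/

open Matrix

/-- The bipartite matrix associated to an `m₁ × n₁` array of `m₂ × n₂` blocks. -/
def bipMatrix {m₁ n₁ m₂ n₂ : ℕ} (M : Fin m₁ → Fin n₁ → Matrix (Fin m₂) (Fin n₂) ℂ) :
    Matrix (Fin m₁ × Fin m₂) (Fin n₁ × Fin n₂) ℂ :=
  Matrix.of fun p q => M p.1 q.1 p.2 q.2

/-- The partial transpose of the bipartite matrix: each block is replaced by its transpose. -/
def bipMatrixPT {m₁ n₁ m₂ n₂ : ℕ} (M : Fin m₁ → Fin n₁ → Matrix (Fin m₂) (Fin n₂) ℂ) :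
    Matrix (Fin m₁ × Fin n₂) (Fin n₁ × Fin m₂) ℂ :=
  Matrix.of fun p q => M p.1 q.1 q.2 p.2

section Projection

open scoped ComplexOrder

variable {𝕜 X Y : Type*} [RCLike 𝕜] [Fintype X] [Fintype Y]

theorem trace_eq_rank_of_isIdempotentElem {K : Type*} [Field K] {P : Matrix X X K}
    (hP : IsIdempotentElem P) : P.trace = P.rank := by
  classical
  have hP' : IsIdempotentElem (toLin' P) := hP.map (toLinAlgEquiv' (R := K))
  rw [← trace_toLin'_eq, (LinearMap.IsIdempotentElem.isProj_range _ hP').trace]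
  rfl

theorem eq_of_mul_eq_of_rank_le {P R : Matrix X X 𝕜} (hP : IsStarProjection P)
    (hR : IsStarProjection R) (hPR : P * R = R) (hrank : P.rank ≤ R.rank) : R = P := by
  classical
  have hsub : IsStarProjection (P - R) := hR.sub_of_mul_eq_right hP hPR
  have hrank_eq : R.rank = P.rank := by
    refine le_antisymm ?_ hrank
    rw [← hPR]
    exact rank_mul_le_left P R
  have htrace : (P - R).trace = 0 := by
    rw [trace_sub, trace_eq_rank_of_isIdempotentElem hP.isIdempotentElem,
      trace_eq_rank_of_isIdempotentElem hR.isIdempotentElem, hrank_eq, sub_self]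
  have hself : (P - R)ᴴ * (P - R) = P - R := by
    rw [← star_eq_conjTranspose, hsub.isSelfAdjoint.star_eq, hsub.isIdempotentElem.eq]
  rw [← hself, trace_conjTranspose_mul_self_eq_zero_iff] at htrace
  exact (sub_eq_zero.mp htrace).symm

variable [DecidableEq X]

/-- The orthogonal projection onto the column space of `F`, as the image of `F * Fᴴ` under the
indicator function of the nonzero reals. -/
noncomputable def rangeProj (F : Matrix X Y 𝕜) : Matrix X X 𝕜 :=
  cfc (fun t : ℝ ↦ if t = 0 then 0 else 1) (F * Fᴴ)

theorem continuousOn_spectrum_real (f : ℝ → ℝ) (A : Matrix X X 𝕜) :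
    ContinuousOn f (spectrum ℝ A) :=
  (finite_real_spectrum (A := A)).continuousOn f

theorem isStarProjection_rangeProj (F : Matrix X Y 𝕜) : IsStarProjection (rangeProj F) where
  isSelfAdjoint := cfc_predicate _ _
  isIdempotentElem := by
    rw [IsIdempotentElem, rangeProj, ← cfc_mul _ _ _ (continuousOn_spectrum_real _ _)
      (continuousOn_spectrum_real _ _)]
    congr with t
    split_ifs <;> simp

theorem rangeProj_mul_conjTranspose_self (F : Matrix X Y 𝕜) :
    rangeProj F * (rangeProj F)ᴴ = rangeProj F := by
  rw [(isStarProjection_rangeProj F).isSelfAdjoint.isHermitian.eq,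
    (isStarProjection_rangeProj F).isIdempotentElem.eq]

theorem exists_rangeProj_eq_mul (F : Matrix X Y 𝕜) : ∃ S : Matrix Y X 𝕜, rangeProj F = F * S := by
  have hid : cfc (fun t : ℝ ↦ t) (F * Fᴴ) = F * Fᴴ :=
    cfc_id' ℝ _ (isHermitian_mul_conjTranspose_self F)
  refine ⟨Fᴴ * cfc (fun t : ℝ ↦ t⁻¹) (F * Fᴴ), ?_⟩
  calc
    rangeProj F = cfc (fun t : ℝ ↦ t * t⁻¹) (F * Fᴴ) := by
      rw [rangeProj]
      congr with t
      split_ifs with ht <;> simp [ht]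
    _ = F * Fᴴ * cfc (fun t : ℝ ↦ t⁻¹) (F * Fᴴ) := by
      rw [cfc_mul _ _ _ (continuousOn_spectrum_real _ _) (continuousOn_spectrum_real _ _), hid]
    _ = F * (Fᴴ * cfc (fun t : ℝ ↦ t⁻¹) (F * Fᴴ)) := Matrix.mul_assoc _ _ _

theorem rangeProj_mul_self (F : Matrix X Y 𝕜) : rangeProj F * F = F := by
  have hid : cfc (fun t : ℝ ↦ t) (F * Fᴴ) = F * Fᴴ :=
    cfc_id' ℝ _ (isHermitian_mul_conjTranspose_self F)
  have hFF : rangeProj F * (F * Fᴴ) = F * Fᴴ := by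
    conv_lhs => rw [← hid, rangeProj, ← cfc_mul _ _ _ (continuousOn_spectrum_real _ _)
      (continuousOn_spectrum_real _ _)]
    conv_rhs => rw [← hid]
    congr with t
    split_ifs with ht <;> simp [ht]
  have hzero : (rangeProj F - 1) * F = 0 := by
    rw [← mul_self_mul_conjTranspose_eq_zero, Matrix.sub_mul, hFF, Matrix.one_mul, sub_self]
  rwa [Matrix.sub_mul, Matrix.one_mul, sub_eq_zero] at hzero

theorem mul_rangeProj_eq {P : Matrix X X 𝕜} {F : Matrix X Y 𝕜} (h : P * F = F) :
    P * rangeProj F = rangeProj F := by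
  obtain ⟨S, hS⟩ := exists_rangeProj_eq_mul F
  rw [hS, ← Matrix.mul_assoc, h]

theorem rank_rangeProj (F : Matrix X Y 𝕜) : (rangeProj F).rank = F.rank := by
  obtain ⟨S, hS⟩ := exists_rangeProj_eq_mul F
  refine le_antisymm ?_ ?_
  · rw [hS]
    exact rank_mul_le_left F S
  · conv_lhs => rw [← rangeProj_mul_self F]
    exact rank_mul_le_left (rangeProj F) F

theorem rangeProj_mem {𝒜 : StarSubalgebra 𝕜 (Matrix X X 𝕜)} {F : Matrix X Y 𝕜}
    (hF : F * Fᴴ ∈ 𝒜) : rangeProj F ∈ 𝒜 := by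
  have : IsClosed (𝒜 : Set (Matrix X X 𝕜)) :=
    (Subalgebra.toSubmodule 𝒜.toSubalgebra).closed_of_finiteDimensional
  exact cfc_mem (𝕜' := 𝕜) (s := 𝒜) _ hF

end Projection

section MinimalProjection

variable {𝕜 X : Type*} [RCLike 𝕜] [Fintype X] [DecidableEq X]

/-- `P` is a minimal projection of the `*`-algebra `𝒜` of matrices: a nonzero projection whose
corner `P𝒜P` consists of scalars. The self-adjoint `H` with `P * H = H` are exactly the
self-adjoint elements of that corner. -/
structure IsMinimalProj (𝒜 : StarSubalgebra 𝕜 (Matrix X X 𝕜)) (P : Matrix X X 𝕜) : Prop where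
  isStarProjection : IsStarProjection P
  mem : P ∈ 𝒜
  ne_zero : P ≠ 0
  eq_smul : ∀ H ∈ 𝒜, IsSelfAdjoint H → P * H = H → ∃ c : 𝕜, H = c • P

theorem exists_eq_smul_of_rank_minimal {𝒜 : StarSubalgebra 𝕜 (Matrix X X 𝕜)} {P H : Matrix X X 𝕜}
    (hP : IsStarProjection P) (hP𝒜 : P ∈ 𝒜)
    (hmin : ∀ R ∈ 𝒜, IsStarProjection R → R ≠ 0 → P * R = R → P.rank ≤ R.rank)
    (hH𝒜 : H ∈ 𝒜) (hH : IsSelfAdjoint H) (hPH : P * H = H) : ∃ c : 𝕜, H = c • P := by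
  obtain rfl | hH0 := eq_or_ne H 0
  · exact ⟨0, (zero_smul 𝕜 P).symm⟩
  obtain ⟨v, t, ht, hv, hHv⟩ := IsHermitian.exists_eigenvector_of_ne_zero hH hH0
  have hPv : P *ᵥ v = v := by
    have h : P *ᵥ (t • v) = t • v := by rw [← hHv, mulVec_mulVec, hPH]
    rw [mulVec_smul] at h
    exact smul_right_injective _ ht h
  set K : Matrix X X 𝕜 := H - (t : 𝕜) • P with hK
  have hKv : K *ᵥ v = 0 := by
    rw [hK, sub_mulVec, smul_mulVec, hPv, hHv, RCLike.real_smul_eq_coe_smul (K := 𝕜), sub_self]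
  have hKself : Kᴴ = K := by
    rw [hK, conjTranspose_sub, conjTranspose_smul, hH.isHermitian.eq,
      hP.isSelfAdjoint.isHermitian.eq, RCLike.star_def, RCLike.conj_ofReal]
  have hK𝒜 : K ∈ 𝒜 := sub_mem hH𝒜 (𝒜.smul_mem hP𝒜 _)
  have hPK : P * K = K := by
    rw [hK, Matrix.mul_sub, hPH, Matrix.mul_smul, hP.isIdempotentElem.eq]
  have hR𝒜 : rangeProj K ∈ 𝒜 := rangeProj_mem (mul_mem hK𝒜 (hKself.symm ▸ hK𝒜))
  -- The range projection of `K` lies below `P` but kills `v`, so it is not `P` itself.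
  obtain hR0 | hR0 := eq_or_ne (rangeProj K) 0
  · refine ⟨t, sub_eq_zero.mp ?_⟩
    rw [← hK, ← rangeProj_mul_self K, hR0, Matrix.zero_mul]
  · have hPR := mul_rangeProj_eq hPK
    have hRP := eq_of_mul_eq_of_rank_le hP (isStarProjection_rangeProj K) hPR
      (hmin _ hR𝒜 (isStarProjection_rangeProj K) hR0 hPR)
    obtain ⟨S, hS⟩ := exists_rangeProj_eq_mul K
    have hPS : P = Sᴴ * K := by
      rw [← hP.isSelfAdjoint.isHermitian.eq, ← hRP, hS, conjTranspose_mul, hKself]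
    refine absurd ?_ hv
    rw [← hPv, hPS, ← mulVec_mulVec, hKv, mulVec_zero]

theorem exists_isMinimalProj_mul_eq {𝒜 : StarSubalgebra 𝕜 (Matrix X X 𝕜)} {P : Matrix X X 𝕜}
    (hP : IsStarProjection P) (hP𝒜 : P ∈ 𝒜) (hP0 : P ≠ 0) :
    ∃ Q, IsMinimalProj 𝒜 Q ∧ P * Q = Q := by
  obtain ⟨Q, ⟨hQ, hQ𝒜, hQ0, hPQ⟩, hmin⟩ := exists_minimalFor_of_wellFoundedLT
    (fun Q : Matrix X X 𝕜 ↦ IsStarProjection Q ∧ Q ∈ 𝒜 ∧ Q ≠ 0 ∧ P * Q = Q) Matrix.rank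
    ⟨P, hP, hP𝒜, hP0, hP.isIdempotentElem⟩
  refine ⟨Q, ⟨hQ, hQ𝒜, hQ0, fun H hH𝒜 hH hQH ↦ ?_⟩, hPQ⟩
  refine exists_eq_smul_of_rank_minimal hQ hQ𝒜 (fun R hR𝒜 hR hR0 hQR ↦ ?_) hH𝒜 hH hQH
  have hPR : P * R = R := by rw [← hQR, ← Matrix.mul_assoc, hPQ]
  exact (le_total Q.rank R.rank).elim id (hmin ⟨hR, hR𝒜, hR0, hPR⟩)

theorem linearIndependent_of_orthogonalIdempotents {K R ι : Type*} [Field K] [Ring R] [Algebra K R]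
    {e : ι → R} (he : OrthogonalIdempotents e) (hne : ∀ i, e i ≠ 0) : LinearIndependent K e := by
  classical
  rw [linearIndependent_iff']
  intro s c hc i hi
  have hci : (∑ j ∈ s, c j • e j) * e i = c i • e i := by
    simp [Finset.sum_mul, he.mul_eq, hi]
  rw [hc, zero_mul, eq_comm, smul_eq_zero] at hci
  exact hci.resolve_right (hne i)

theorem exists_option_isMinimalProj {𝒜 : StarSubalgebra 𝕜 (Matrix X X 𝕜)} {ι : Type*} [Fintype ι]
    {P : ι → Matrix X X 𝕜} (hP : OrthogonalIdempotents P) (hmin : ∀ i, IsMinimalProj 𝒜 (P i))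
    (hne : ∑ i, P i ≠ 1) : ∃ Q, OrthogonalIdempotents (Option.elim · Q P) ∧ IsMinimalProj 𝒜 Q := by
  have hsum : IsStarProjection (∑ i, P i) :=
    ⟨hP.isIdempotentElem_sum, isSelfAdjoint_sum _ fun i _ ↦ (hmin i).isStarProjection.isSelfAdjoint⟩
  have hmem : 1 - ∑ i, P i ∈ 𝒜 := sub_mem (one_mem 𝒜) (sum_mem fun i _ ↦ (hmin i).mem)
  obtain ⟨Q, hQ, hle⟩ :=
    exists_isMinimalProj_mul_eq hsum.one_sub hmem (sub_ne_zero.mpr hne.symm)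
  have hleft : (∑ i, P i) * Q = 0 := by
    rwa [sub_mul, one_mul, sub_eq_self] at hle
  have hright : Q * ∑ i, P i = 0 := by
    simpa [hQ.isStarProjection.isSelfAdjoint.star_eq, hsum.isSelfAdjoint.star_eq] using
      congrArg star hleft
  exact ⟨Q, hP.option Q hQ.isStarProjection.isIdempotentElem hright hleft, hQ⟩

theorem exists_completeOrthogonalIdempotents_isMinimalProj
    (𝒜 : StarSubalgebra 𝕜 (Matrix X X 𝕜)) :
    ∃ (k : ℕ) (P : Fin k → Matrix X X 𝕜), k ≤ Module.finrank 𝕜 𝒜 ∧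
      CompleteOrthogonalIdempotents P ∧ ∀ i, IsMinimalProj 𝒜 (P i) := by
  have hcard {k : ℕ} {P : Fin k → Matrix X X 𝕜} (hP : OrthogonalIdempotents P)
      (hmin : ∀ i, IsMinimalProj 𝒜 (P i)) : k ≤ Module.finrank 𝕜 𝒜 := by
    have : Module.Finite 𝕜 𝒜 :=
      inferInstanceAs (Module.Finite 𝕜 (Subalgebra.toSubmodule 𝒜.toSubalgebra))
    let Q (i : Fin k) : 𝒜 := ⟨P i, (hmin i).mem⟩
    have hQ : LinearIndependent 𝕜 Q :=
      .of_comp 𝒜.subtype.toLinearMap (linearIndependent_of_orthogonalIdempotents hP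
        fun i ↦ (hmin i).ne_zero)
    simpa using hQ.fintype_card_le_finrank
  by_contra! hcon
  -- No orthogonal family of minimal projections is complete, so all of them can be enlarged.
  have hlarge (k : ℕ) : ∃ P : Fin k → Matrix X X 𝕜,
      OrthogonalIdempotents P ∧ ∀ i, IsMinimalProj 𝒜 (P i) := by
    induction k with
    | zero => exact ⟨Fin.elim0, ⟨fun i ↦ i.elim0, fun i ↦ i.elim0⟩, fun i ↦ i.elim0⟩
    | succ k ih =>
      obtain ⟨P, hP, hmin⟩ := ih
      have hne : ∑ i, P i ≠ 1 := fun hsum ↦ by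
        obtain ⟨i, hi⟩ := hcon k P (hcard hP hmin) ⟨hP, hsum⟩
        exact hi (hmin i)
      obtain ⟨Q, hPQ, hQ⟩ := exists_option_isMinimalProj hP hmin hne
      refine ⟨_, hPQ.embedding (finSuccEquiv k).toEmbedding, fun i ↦ ?_⟩
      refine Fin.cases ?_ (fun j ↦ ?_) i
      · simpa using hQ
      · simpa using hmin j
  obtain ⟨P, hP, hmin⟩ := hlarge (Module.finrank 𝕜 𝒜 + 1)
  exact absurd (hcard hP hmin) (by omega)

end MinimalProjection

section InvariantAlgebra

section

variable (R G X : Type*) [CommSemiring R] [StarRing R] [Group G] [MulAction G X]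
  [Fintype X] [DecidableEq X]

/-- The `*`-algebra of matrices commuting with the permutation matrices of an action of `G`,
described by its entries: they are constant on the orbits of `G` on pairs of indices. -/
def invariantAlgebra : StarSubalgebra R (Matrix X X R) where
  carrier := {M | ∀ (g : G) (x y : X), M (g • x) (g • y) = M x y}
  mul_mem' {M N} hM hN g x y := by
    rw [mul_apply, mul_apply, ← Equiv.sum_comp (MulAction.toPerm g)]
    exact Finset.sum_congr rfl fun z _ ↦ congrArg₂ (· * ·) (hM g x z) (hN g z y)
  add_mem' hM hN g x y := congrArg₂ (· + ·) (hM g x y) (hN g x y)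
  algebraMap_mem' r g x y := by
    simp only [algebraMap_matrix_apply, smul_left_cancel_iff]
  star_mem' hM g x y := congrArg star (hM g y x)

end

variable {R G X Y : Type*} [CommSemiring R] [StarRing R] [Group G] [MulAction G X] [MulAction G Y]
  [Fintype X] [DecidableEq X] [Fintype Y]

theorem mem_invariantAlgebra {M : Matrix X X R} :
    M ∈ invariantAlgebra R G X ↔ ∀ (g : G) (x y : X), M (g • x) (g • y) = M x y :=
  Iff.rfl

theorem mul_conjTranspose_mem_invariantAlgebra {F : Matrix X Y R}
    (hF : ∀ (g : G) (x : X) (y : Y), F (g • x) (g • y) = F x y) :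
    F * Fᴴ ∈ invariantAlgebra R G X := by
  rw [mem_invariantAlgebra]
  intro g x x'
  rw [mul_apply, mul_apply, ← Equiv.sum_comp (MulAction.toPerm g)]
  exact Finset.sum_congr rfl fun y _ ↦ congrArg₂ (· * ·) (hF g x y) (congrArg star (hF g x' y))

end InvariantAlgebra

section Words

theorem exists_perm_comp_eq_of_card_fiber_eq {ι Y : Type*} [Fintype ι] [DecidableEq Y]
    {f g : ι → Y} (h : ∀ y, Fintype.card {i // f i = y} = Fintype.card {i // g i = y}) :
    ∃ σ : Equiv.Perm ι, g ∘ σ = f := by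
  have e (y : Y) : Nonempty ({i // f i = y} ≃ {i // g i = y}) := Fintype.card_eq.mp (h y)
  exact ⟨Equiv.ofFiberEquiv fun y ↦ (e y).some, funext (Equiv.ofFiberEquiv_map _)⟩

variable {R ι X : Type*} [Field R] [StarRing R] [Fintype ι] [DecidableEq ι] [Fintype X]
  [DecidableEq X]

theorem apply_eq_of_card_fiber_eq {M : Matrix (ι → X) (ι → X) R}
    (hM : M ∈ invariantAlgebra R (Equiv.Perm ι)ᵈᵐᵃ (ι → X)) {v w v' w' : ι → X}
    (h : ∀ y : X × X, Fintype.card {i // (v i, w i) = y} = Fintype.card {i // (v' i, w' i) = y}) :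
    M v w = M v' w' := by
  obtain ⟨σ, hσ⟩ := exists_perm_comp_eq_of_card_fiber_eq h
  have hv : DomMulAct.mk σ • v' = v := funext fun i ↦ congrArg Prod.fst (congrFun hσ i)
  have hw : DomMulAct.mk σ • w' = w := funext fun i ↦ congrArg Prod.snd (congrFun hσ i)
  rw [← hv, ← hw, mem_invariantAlgebra.mp hM]

theorem finrank_invariantAlgebra_le :
    Module.finrank R (invariantAlgebra R (Equiv.Perm ι)ᵈᵐᵃ (ι → X)) ≤
      (Fintype.card ι + 1) ^ (Fintype.card X * Fintype.card X) := by
  let τ (p : (ι → X) × (ι → X)) (y : X × X) : Fin (Fintype.card ι + 1) :=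
    ⟨Fintype.card {i // (p.1 i, p.2 i) = y}, Nat.lt_succ_of_le (Fintype.card_subtype_le _)⟩
  let T : ((X × X → Fin (Fintype.card ι + 1)) → R) →ₗ[R] Matrix (ι → X) (ι → X) R :=
    (LinearEquiv.curry R R (ι → X) (ι → X)).toLinearMap ∘ₗ LinearMap.funLeft R R τ
  have hT : Subalgebra.toSubmodule
      (invariantAlgebra R (Equiv.Perm ι)ᵈᵐᵃ (ι → X)).toSubalgebra ≤ LinearMap.range T := by
    intro M hM
    have hfactor : Function.FactorsThrough (fun p ↦ M p.1 p.2) τ := fun p q hpq ↦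
      apply_eq_of_card_fiber_eq hM fun y ↦ congrArg Fin.val (congrFun hpq y)
    exact ⟨Function.extend τ (fun p ↦ M p.1 p.2) 0,
      Matrix.ext fun v w ↦ hfactor.extend_apply 0 (v, w)⟩
  calc
    Module.finrank R (invariantAlgebra R (Equiv.Perm ι)ᵈᵐᵃ (ι → X))
      ≤ Module.finrank R (LinearMap.range T) := Submodule.finrank_mono hT
    _ ≤ Module.finrank R ((X × X → Fin (Fintype.card ι + 1)) → R) := LinearMap.finrank_range_le T
    _ = (Fintype.card ι + 1) ^ (Fintype.card X * Fintype.card X) := by simp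

end Words

section PartialTrace

open scoped Kronecker

section

variable {B D R : Type*} [Semiring R] [Fintype D]

/-- The partial trace of an operator on `B ⊗ D` over the second factor. -/
def partialTrace (M : Matrix (B × D) (B × D) R) : Matrix B B R :=
  of fun b b' ↦ ∑ d, M (b, d) (b', d)

theorem trace_partialTrace [Fintype B] (M : Matrix (B × D) (B × D) R) :
    (partialTrace M).trace = M.trace :=
  (Fintype.sum_prod_type fun p ↦ M p p).symm

theorem partialTrace_kronecker_one_mul [Fintype B] [DecidableEq D] (P : Matrix B B R)
    (M : Matrix (B × D) (B × D) R) :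
    partialTrace ((P ⊗ₖ (1 : Matrix D D R)) * M) = P * partialTrace M := by
  ext b b'
  simp only [partialTrace, of_apply, mul_apply, kroneckerMap_apply, Finset.mul_sum,
    Fintype.sum_prod_type, one_apply, mul_ite, mul_one, mul_zero, ite_mul, zero_mul,
    Finset.sum_ite_eq, Finset.mem_univ, if_true]
  exact Finset.sum_comm

theorem isSelfAdjoint_partialTrace [StarRing R] {M : Matrix (B × D) (B × D) R}
    (hM : IsSelfAdjoint M) : IsSelfAdjoint (partialTrace M) := by
  ext b b'
  rw [star_apply, partialTrace, of_apply, of_apply, star_sum]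
  exact Finset.sum_congr rfl fun d _ ↦ congrFun (congrFun hM (b, d)) (b', d)

end

section

variable {G B D : Type*} [Group G] [MulAction G B] [MulAction G D] [Fintype B] [DecidableEq B]
  [Fintype D] [DecidableEq D]

theorem partialTrace_mem_invariantAlgebra {R : Type*} [CommSemiring R] [StarRing R]
    {M : Matrix (B × D) (B × D) R} (hM : M ∈ invariantAlgebra R G (B × D)) :
    partialTrace M ∈ invariantAlgebra R G B := by
  rw [mem_invariantAlgebra]
  intro g b b'
  rw [partialTrace, of_apply, of_apply, ← Equiv.sum_comp (MulAction.toPerm g)]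
  exact Finset.sum_congr rfl fun d _ ↦ hM g (b, d) (b', d)

theorem IsMinimalProj.exists_partialTrace_eq_smul {𝕜 : Type*} [RCLike 𝕜] {P : Matrix B B 𝕜}
    (hP : IsMinimalProj (invariantAlgebra 𝕜 G B) P) {M : Matrix (B × D) (B × D) 𝕜}
    (hM : M ∈ invariantAlgebra 𝕜 G (B × D)) (hself : IsSelfAdjoint M)
    (hPM : (P ⊗ₖ (1 : Matrix D D 𝕜)) * M = M) : ∃ t : 𝕜, partialTrace M = t • P :=
  hP.eq_smul _ (partialTrace_mem_invariantAlgebra hM) (isSelfAdjoint_partialTrace hself)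
    (by rw [← partialTrace_kronecker_one_mul, hPM])

end

end PartialTrace

section MoveLeg

variable {B C D R U V W : Type*}

/-- The reshaping of an operator `U → B ⊗ D` into an operator `U ⊗ D → B`. -/
def moveLeg (M : Matrix (B × D) U R) : Matrix B (U × D) R :=
  of fun b p ↦ M (b, p.2) p.1

theorem moveLeg_mul_conjTranspose [Semiring R] [StarRing R] [Fintype D] [Fintype U]
    (M : Matrix (B × D) U R) : moveLeg M * (moveLeg M)ᴴ = partialTrace (M * Mᴴ) := by
  ext b b'
  rw [mul_apply, Fintype.sum_prod_type_right]
  rfl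

theorem trace_conjTranspose_mul_mul [CommSemiring R] [StarRing R] [Fintype B] [Fintype C]
    [Fintype V] [Fintype W] (M : Matrix B V R) (X : Matrix V C R) (N : Matrix B W R)
    (Y : Matrix W C R) :
    ((M * X)ᴴ * (N * Y)).trace = ∑ v, ∑ w, (Mᴴ * N) v w * (Xᵀᴴ * Yᵀ) v w := by
  calc
    ((M * X)ᴴ * (N * Y)).trace = ((Mᴴ * N) * (Xᵀᴴ * Yᵀ)ᵀ).trace := by
      have hX : (Xᵀᴴ)ᵀ = Xᴴ := rfl
      rw [transpose_mul, transpose_transpose, hX, conjTranspose_mul, Matrix.mul_assoc,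
        trace_mul_comm, ← Matrix.mul_assoc, Matrix.mul_assoc]
    _ = ∑ v, ∑ w, (Mᴴ * N) v w * (Xᵀᴴ * Yᵀ) v w := rfl

end MoveLeg

section CauchySchwarz

variable {𝕜 A B C D V W : Type*} [RCLike 𝕜] [Fintype A] [Fintype B] [Fintype C] [Fintype D]
  [Fintype V] [Fintype W]

theorem norm_trace_mul_conjTranspose_self (M : Matrix V W 𝕜) :
    ‖(M * Mᴴ).trace‖ = ∑ v, ∑ w, ‖M v w‖ ^ 2 := by
  have h : (M * Mᴴ).trace = ((∑ v, ∑ w, ‖M v w‖ ^ 2 : ℝ) : 𝕜) := by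
    push_cast
    exact Finset.sum_congr rfl fun v _ ↦ Finset.sum_congr rfl fun w _ ↦ RCLike.mul_conj (M v w)
  rw [h, RCLike.norm_ofReal, abs_of_nonneg (by positivity)]

theorem sum_norm_sq_conjTranspose_mul (M : Matrix B V 𝕜) (N : Matrix B W 𝕜) :
    ∑ v, ∑ w, ‖(Mᴴ * N) v w‖ ^ 2 = ‖(M * Mᴴ * (N * Nᴴ)).trace‖ := by
  rw [← norm_trace_mul_conjTranspose_self, conjTranspose_mul, conjTranspose_conjTranspose,
    Matrix.mul_assoc, trace_mul_comm, ← Matrix.mul_assoc N, Matrix.mul_assoc, trace_mul_comm]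

theorem norm_sum_swap_sq_le (Z : Matrix (V × D) (W × C) 𝕜) (Y : Matrix (V × C) (W × D) 𝕜) :
    ‖∑ c, ∑ d, ∑ v, ∑ w, Z (v, d) (w, c) * Y (v, c) (w, d)‖ ^ 2 ≤
      (∑ p, ∑ q, ‖Z p q‖ ^ 2) * ∑ p, ∑ q, ‖Y p q‖ ^ 2 := by
  let eZ : C × D × V × W ≃ (V × D) × (W × C) :=
    ⟨fun p ↦ ((p.2.2.1, p.2.1), (p.2.2.2, p.1)), fun q ↦ (q.2.2, q.1.2, q.1.1, q.2.1),
      fun _ ↦ rfl, fun _ ↦ rfl⟩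
  let eY : C × D × V × W ≃ (V × C) × (W × D) :=
    ⟨fun p ↦ ((p.2.2.1, p.1), (p.2.2.2, p.2.1)), fun q ↦ (q.1.2, q.2.2, q.1.1, q.2.1),
      fun _ ↦ rfl, fun _ ↦ rfl⟩
  calc
    ‖∑ c, ∑ d, ∑ v, ∑ w, Z (v, d) (w, c) * Y (v, c) (w, d)‖ ^ 2
      = ‖∑ k, Z (eZ k).1 (eZ k).2 * Y (eY k).1 (eY k).2‖ ^ 2 := by
        simp only [Fintype.sum_prod_type, eZ, eY, Equiv.coe_fn_mk]
    _ ≤ (∑ k, ‖Z (eZ k).1 (eZ k).2‖ * ‖Y (eY k).1 (eY k).2‖) ^ 2 := by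
        gcongr
        exact norm_sum_le_of_le _ fun k _ ↦ norm_mul_le _ _
    _ ≤ (∑ k, ‖Z (eZ k).1 (eZ k).2‖ ^ 2) * ∑ k, ‖Y (eY k).1 (eY k).2‖ ^ 2 :=
        Finset.sum_mul_sq_le_sq_mul_sq _ _ _
    _ = (∑ p, ∑ q, ‖Z p q‖ ^ 2) * ∑ p, ∑ q, ‖Y p q‖ ^ 2 := by
        rw [eZ.sum_comp fun r ↦ ‖Z r.1 r.2‖ ^ 2, eY.sum_comp fun r ↦ ‖Y r.1 r.2‖ ^ 2]
        simp only [Fintype.sum_prod_type]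

theorem norm_sum_star_mul_sq_le (M : Matrix (B × D) V 𝕜) (X : Matrix V (A × C) 𝕜)
    (N : Matrix (B × C) W 𝕜) (Y : Matrix W (A × D) 𝕜) :
    ‖∑ c, ∑ d, ∑ a, ∑ b, star ((M * X) (b, d) (a, c)) * (N * Y) (b, c) (a, d)‖ ^ 2 ≤
      ‖(partialTrace (M * Mᴴ) * partialTrace (N * Nᴴ)).trace‖ *
        ‖(partialTrace (Xᵀ * Xᵀᴴ) * partialTrace (Yᵀ * Yᵀᴴ)).trace‖ := by
  have hpairing : ∑ c, ∑ d, ∑ a, ∑ b, star ((M * X) (b, d) (a, c)) * (N * Y) (b, c) (a, d) =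
      ∑ c, ∑ d, ∑ v, ∑ w, ((moveLeg M)ᴴ * moveLeg N) (v, d) (w, c) *
        ((moveLeg Xᵀ)ᴴ * moveLeg Yᵀ) (v, c) (w, d) :=
    Finset.sum_congr rfl fun c _ ↦ Finset.sum_congr rfl fun d _ ↦
      trace_conjTranspose_mul_mul (M.submatrix (·, d) id) (X.submatrix id (·, c))
        (N.submatrix (·, c) id) (Y.submatrix id (·, d))
  rw [hpairing]
  simp only [← moveLeg_mul_conjTranspose, ← sum_norm_sq_conjTranspose_mul]
  exact norm_sum_swap_sq_le _ _

end CauchySchwarz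

section Flattening

open scoped Kronecker

section

variable {A B C D R : Type*} [Semiring R]

/-- The matrix of a four-leg tensor with the first two legs as rows and the last two as columns.
The other groupings of the legs are obtained by permuting the arguments of the tensor. -/
def pairFlattening (ψ : A → B → C → D → R) : Matrix (A × B) (C × D) R :=
  of fun p q ↦ ψ p.1 p.2 q.1 q.2

theorem kronecker_one_mul_pairFlattening [Fintype A] [Fintype B] [DecidableEq B]
    {P : Matrix A A R} {ψ : A → B → C → D → R} (h : ∀ b c d, P *ᵥ (ψ · b c d) = (ψ · b c d)) :
    (P ⊗ₖ (1 : Matrix B B R)) * pairFlattening ψ = pairFlattening ψ := by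
  ext ⟨a, b⟩ ⟨c, d⟩
  rw [mul_apply, Fintype.sum_prod_type]
  simpa [pairFlattening, mulVec, dotProduct, one_apply] using congrFun (h b c d) a

variable [StarRing R] [Fintype B] [Fintype C] [Fintype D]

/-- The marginal on the first leg of the (unnormalized) pure state `ψ`. -/
def marginal (ψ : A → B → C → D → R) : Matrix A A R :=
  partialTrace (pairFlattening ψ * (pairFlattening ψ)ᴴ)

theorem marginal_apply (ψ : A → B → C → D → R) (a a' : A) :
    marginal ψ a a' = ∑ b, ∑ c, ∑ d, ψ a b c d * star (ψ a' b c d) :=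
  Finset.sum_congr rfl fun _ _ ↦ Fintype.sum_prod_type _

theorem marginal_swap_left (ψ : A → B → C → D → R) :
    marginal (fun a c b d ↦ ψ a b c d) = marginal ψ := by
  ext a a'
  rw [marginal_apply, marginal_apply]
  exact Finset.sum_comm

theorem marginal_swap_right (ψ : A → B → C → D → R) :
    marginal (fun a b d c ↦ ψ a b c d) = marginal ψ := by
  ext a a'
  rw [marginal_apply, marginal_apply]
  exact Finset.sum_congr rfl fun b _ ↦ Finset.sum_comm

end

section

variable {𝕜 A B C D : Type*} [RCLike 𝕜] [Fintype A] [Fintype B] [Fintype C] [Fintype D]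

theorem trace_marginal_ne_zero {ψ : A → B → C → D → 𝕜} (hψ : ψ ≠ 0) :
    (marginal ψ).trace ≠ 0 := by
  contrapose! hψ
  rw [marginal, trace_partialTrace, ← norm_eq_zero, norm_trace_mul_conjTranspose_self] at hψ
  ext a b c d
  rw [Finset.sum_eq_zero_iff_of_nonneg fun _ _ ↦ by positivity] at hψ
  have hab := hψ (a, b) (Finset.mem_univ _)
  rw [Finset.sum_eq_zero_iff_of_nonneg fun _ _ ↦ by positivity] at hab
  simpa [pairFlattening] using hab (c, d) (Finset.mem_univ _)

theorem norm_trace_marginal_sq_le [DecidableEq B] [DecidableEq C] [DecidableEq D]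
    (ψ : A → B → C → D → 𝕜) :
    ‖(marginal ψ).trace‖ ^ 2 ≤
      ‖(partialTrace (rangeProj (pairFlattening fun b d a c ↦ ψ a b c d)) *
          partialTrace (rangeProj (pairFlattening fun b c a d ↦ ψ a b c d))).trace‖ *
        ‖(marginal ψ * marginal ψ).trace‖ := by
  set F : Matrix (B × D) (A × C) 𝕜 := pairFlattening fun b d a c ↦ ψ a b c d
  set F' : Matrix (B × C) (A × D) 𝕜 := pairFlattening fun b c a d ↦ ψ a b c d
  have htrace : (marginal ψ).trace =
      ∑ c, ∑ d, ∑ a, ∑ b, star (F (b, d) (a, c)) * F' (b, c) (a, d) := by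
    rw [← marginal_swap_left, ← marginal_swap_right]
    simp only [trace, diag_apply, marginal_apply, mul_comm (ψ _ _ _ _)]
    rw [Finset.sum_comm]
    exact Finset.sum_congr rfl fun c _ ↦ Finset.sum_comm
  have hF : partialTrace (Fᵀ * Fᵀᴴ) = marginal ψ := marginal_swap_left ψ
  have hF' : partialTrace (F'ᵀ * F'ᵀᴴ) = marginal ψ :=
    (marginal_swap_left fun a b d c ↦ ψ a b c d).trans (marginal_swap_right ψ)
  have h := norm_sum_star_mul_sq_le (rangeProj F) F (rangeProj F') F'
  rwa [rangeProj_mul_self, rangeProj_mul_self, ← htrace, hF, hF',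
    rangeProj_mul_conjTranspose_self, rangeProj_mul_conjTranspose_self] at h

end

end Flattening

section FlatTensor

variable {𝕜 G A B C D : Type*} [RCLike 𝕜] [Group G] [MulAction G A] [MulAction G B]
  [MulAction G C] [MulAction G D] [Fintype A] [Fintype B] [Fintype C] [Fintype D]
  [DecidableEq A] {P : Matrix A A 𝕜} {ψ : A → B → C → D → 𝕜}

theorem IsMinimalProj.exists_marginal_eq_smul (hP : IsMinimalProj (invariantAlgebra 𝕜 G A) P)
    (hψ : ∀ (g : G) a b c d, ψ (g • a) (g • b) (g • c) (g • d) = ψ a b c d)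
    (hPψ : ∀ b c d, P *ᵥ (ψ · b c d) = (ψ · b c d)) : ∃ t : 𝕜, marginal ψ = t • P := by
  classical
  exact hP.exists_partialTrace_eq_smul
    (mul_conjTranspose_mem_invariantAlgebra fun g _ _ ↦ hψ g _ _ _ _)
    (isHermitian_mul_conjTranspose_self _)
    (by rw [← Matrix.mul_assoc, kronecker_one_mul_pairFlattening hPψ])

theorem IsMinimalProj.exists_partialTrace_rangeProj_eq_smul [DecidableEq B]
    (hP : IsMinimalProj (invariantAlgebra 𝕜 G A) P)
    (hψ : ∀ (g : G) a b c d, ψ (g • a) (g • b) (g • c) (g • d) = ψ a b c d)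
    (hPψ : ∀ b c d, P *ᵥ (ψ · b c d) = (ψ · b c d)) :
    ∃ t : 𝕜, partialTrace (rangeProj (pairFlattening ψ)) = t • P ∧
      t * P.rank = (pairFlattening ψ).rank := by
  obtain ⟨t, ht⟩ := hP.exists_partialTrace_eq_smul
    (rangeProj_mem (mul_conjTranspose_mem_invariantAlgebra fun g _ _ ↦ hψ g _ _ _ _))
    (isStarProjection_rangeProj _).isSelfAdjoint
    (mul_rangeProj_eq (kronecker_one_mul_pairFlattening hPψ))
  refine ⟨t, ht, ?_⟩
  rw [← rank_rangeProj (pairFlattening ψ),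
    ← trace_eq_rank_of_isIdempotentElem hP.isStarProjection.isIdempotentElem,
    ← trace_eq_rank_of_isIdempotentElem (isStarProjection_rangeProj _).isIdempotentElem,
    ← trace_partialTrace, ht, trace_smul, smul_eq_mul]

theorem IsMinimalProj.rank_mul_rank_le [DecidableEq B] {Q : Matrix B B 𝕜}
    (hP : IsMinimalProj (invariantAlgebra 𝕜 G A) P) (hQ : IsMinimalProj (invariantAlgebra 𝕜 G B) Q)
    (hψ : ∀ (g : G) a b c d, ψ (g • a) (g • b) (g • c) (g • d) = ψ a b c d)
    (hPψ : ∀ b c d, P *ᵥ (ψ · b c d) = (ψ · b c d))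
    (hQψ : ∀ a c d, Q *ᵥ (ψ a · c d) = (ψ a · c d)) (hψ0 : ψ ≠ 0) :
    P.rank * Q.rank ≤ (pairFlattening fun b d a c ↦ ψ a b c d).rank *
      (pairFlattening fun b c a d ↦ ψ a b c d).rank := by
  classical
  obtain ⟨α, hα⟩ := hP.exists_marginal_eq_smul hψ hPψ
  obtain ⟨s, hs, hs_rank⟩ := hQ.exists_partialTrace_rangeProj_eq_smul
    (ψ := fun b d a c ↦ ψ a b c d) (fun g _ _ _ _ ↦ hψ g _ _ _ _) fun d a c ↦ hQψ a c d
  obtain ⟨t, ht, ht_rank⟩ := hQ.exists_partialTrace_rangeProj_eq_smul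
    (ψ := fun b c a d ↦ ψ a b c d) (fun g _ _ _ _ ↦ hψ g _ _ _ _) fun c a d ↦ hQψ a c d
  have hP_trace := trace_eq_rank_of_isIdempotentElem hP.isStarProjection.isIdempotentElem
  have hQ_trace := trace_eq_rank_of_isIdempotentElem hQ.isStarProjection.isIdempotentElem
  have hα_pos : 0 < ‖α‖ ^ 2 * P.rank := by
    have h := trace_marginal_ne_zero hψ0
    rw [hα, trace_smul, hP_trace, smul_eq_mul, mul_ne_zero_iff, Nat.cast_ne_zero] at h
    have := norm_pos_iff.mpr h.1
    have := Nat.pos_of_ne_zero h.2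
    positivity
  have hcs := norm_trace_marginal_sq_le ψ
  simp only [hα, hs, ht, Matrix.smul_mul, Matrix.mul_smul, smul_smul, trace_smul, smul_eq_mul,
    hP.isStarProjection.isIdempotentElem.eq, hQ.isStarProjection.isIdempotentElem.eq, hP_trace,
    hQ_trace, norm_mul, RCLike.norm_natCast] at hcs
  have hs_norm := congrArg norm hs_rank
  have ht_norm := congrArg norm ht_rank
  rw [norm_mul, RCLike.norm_natCast, RCLike.norm_natCast] at hs_norm ht_norm
  have hle : (P.rank * Q.rank : ℝ) ≤ (‖s‖ * Q.rank) * (‖t‖ * Q.rank) := by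
    refine le_of_mul_le_mul_left ?_ hα_pos
    linear_combination (Q.rank : ℝ) * hcs
  rw [hs_norm, ht_norm] at hle
  exact_mod_cast hle

end FlatTensor

section Rank

open scoped Kronecker

variable {X Y K : Type*} [Fintype Y] [Field K]

theorem exists_rank_factorization [Fintype X] (M : Matrix X Y K) :
    (∃ (U : Matrix X (Fin M.rank) K) (V : Matrix (Fin M.rank) Y K), M = U * V) ∧
      ∃ (L : Matrix (Fin M.rank) X K) (R : Matrix Y (Fin M.rank) K), L * M * R = 1 := by
  classical
  let f := toLin' M
  let e : LinearMap.range f ≃ₗ[K] (Fin M.rank → K) :=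
    LinearEquiv.ofFinrankEq _ _ (by rw [Module.finrank_fin_fun]; rfl)
  let u := (LinearMap.range f).subtype ∘ₗ e.symm.toLinearMap
  let v := e.toLinearMap ∘ₗ f.rangeRestrict
  have huv : f = u ∘ₗ v := LinearMap.ext fun x ↦ by simp [u, v]
  have hM : M = LinearMap.toMatrix' u * LinearMap.toMatrix' v := by
    rw [← LinearMap.toMatrix'_comp, ← huv, LinearMap.toMatrix'_toLin']
  obtain ⟨l, hl⟩ := u.exists_leftInverse_of_injective
    (LinearMap.ker_eq_bot.mpr (Subtype.val_injective.comp e.symm.injective))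
  obtain ⟨r, hr⟩ := v.exists_rightInverse_of_surjective
    (LinearMap.range_eq_top.mpr (e.surjective.comp f.surjective_rangeRestrict))
  refine ⟨⟨_, _, hM⟩, LinearMap.toMatrix' l, LinearMap.toMatrix' r, ?_⟩
  calc
    LinearMap.toMatrix' l * M * LinearMap.toMatrix' r
      = LinearMap.toMatrix' ((l ∘ₗ u) ∘ₗ (v ∘ₗ r)) := by
        rw [LinearMap.comp_assoc, ← LinearMap.comp_assoc r, ← huv, ← LinearMap.comp_assoc,
          LinearMap.toMatrix'_comp, LinearMap.toMatrix'_comp, LinearMap.toMatrix'_toLin']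
    _ = 1 := by rw [hl, hr, LinearMap.id_comp, LinearMap.toMatrix'_id]

theorem rank_mul_le_card {R Z : Type*} [CommSemiring R] [StrongRankCondition R] [Fintype Z]
    (U : Matrix X Z R) (V : Matrix Z Y R) : (U * V).rank ≤ Fintype.card Z :=
  (rank_mul_le_left U V).trans (rank_le_card_width U)

theorem rank_kronecker_le {X' Y' : Type*} [Finite X] [Finite X'] [Fintype Y'] (M : Matrix X Y K)
    (N : Matrix X' Y' K) : (M ⊗ₖ N).rank ≤ M.rank * N.rank := by
  have := Fintype.ofFinite X
  have := Fintype.ofFinite X'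
  obtain ⟨⟨U, V, hM⟩, -⟩ := exists_rank_factorization M
  obtain ⟨⟨U', V', hN⟩, -⟩ := exists_rank_factorization N
  calc
    (M ⊗ₖ N).rank = ((U ⊗ₖ U') * (V ⊗ₖ V')).rank := by rw [← mul_kronecker_mul, ← hM, ← hN]
    _ ≤ Fintype.card (Fin M.rank × Fin N.rank) := rank_mul_le_card _ _
    _ = M.rank * N.rank := by simp

theorem rank_add_le [Finite X] (M N : Matrix X Y K) : (M + N).rank ≤ M.rank + N.rank := by
  have h : LinearMap.range (M + N).mulVecLin ≤
      LinearMap.range M.mulVecLin ⊔ LinearMap.range N.mulVecLin := by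
    rw [mulVecLin_add]
    exact LinearMap.range_add_le _ _
  exact (Submodule.finrank_mono h).trans (Submodule.finrank_add_le_finrank_add_finrank _ _)

theorem rank_sum_le {ι : Type*} [Finite X] (s : Finset ι) (F : ι → Matrix X Y K) :
    (∑ i ∈ s, F i).rank ≤ ∑ i ∈ s, (F i).rank := by
  classical
  induction s using Finset.induction_on with
  | empty => simp
  | insert i s hi ih =>
    rw [Finset.sum_insert hi, Finset.sum_insert hi]
    exact (rank_add_le _ _).trans (Nat.add_le_add_left ih _)

end Rank

section TensorPower

section

variable {ι X Y Z R : Type*} [Fintype ι] [CommSemiring R]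

/-- The tensor power `M^{⊗ι}`, indexed by words. -/
def tensorPow (ι : Type*) [Fintype ι] (M : Matrix X Y R) : Matrix (ι → X) (ι → Y) R :=
  of fun v w ↦ ∏ i, M (v i) (w i)

theorem tensorPow_mul [DecidableEq ι] [Fintype Y] (M : Matrix X Y R) (N : Matrix Y Z R) :
    tensorPow ι (M * N) = tensorPow ι M * tensorPow ι N := by
  ext v w
  simp only [tensorPow, of_apply, mul_apply, ← Finset.prod_mul_distrib]
  rw [Finset.prod_univ_sum, Fintype.piFinset_univ]

theorem tensorPow_one [DecidableEq X] : tensorPow ι (1 : Matrix X X R) = 1 := by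
  ext v w
  simp [tensorPow, one_apply, Finset.prod_ite_zero, funext_iff]

theorem rank_tensorPow {K : Type*} [Field K] [Finite X] [DecidableEq ι] [Fintype Y]
    (M : Matrix X Y K) : (tensorPow ι M).rank = M.rank ^ Fintype.card ι := by
  have := Fintype.ofFinite X
  obtain ⟨⟨U, V, hM⟩, L, R, hone⟩ := exists_rank_factorization M
  apply le_antisymm
  · calc
      (tensorPow ι M).rank = (tensorPow ι U * tensorPow ι V).rank := by rw [← tensorPow_mul, ← hM]
      _ ≤ Fintype.card (ι → Fin M.rank) := rank_mul_le_card _ _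
      _ = M.rank ^ Fintype.card ι := by simp
  · calc
      M.rank ^ Fintype.card ι = (tensorPow ι (L * M * R)).rank := by
        simp [hone, tensorPow_one, rank_one]
      _ ≤ (tensorPow ι M).rank := by
        rw [tensorPow_mul, tensorPow_mul]
        exact (rank_mul_le_left _ _).trans (rank_mul_le_right _ _)

end

section

variable {ι A B C D R : Type*} [Fintype ι]

/-- The tensor power `ψ^{⊗ι}` of a four-leg tensor, each leg being indexed by words. -/
def legTensorPow [CommMonoid R] (ι : Type*) [Fintype ι] (ψ : A → B → C → D → R) :
    (ι → A) → (ι → B) → (ι → C) → (ι → D) → R :=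
  fun a b c d ↦ ∏ i, ψ (a i) (b i) (c i) (d i)

theorem legTensorPow_smul [CommMonoid R] (ψ : A → B → C → D → R) (g : (Equiv.Perm ι)ᵈᵐᵃ)
    (a : ι → A) (b : ι → B) (c : ι → C) (d : ι → D) :
    legTensorPow ι ψ (g • a) (g • b) (g • c) (g • d) = legTensorPow ι ψ a b c d :=
  Equiv.prod_comp (DomMulAct.mk.symm g) fun i ↦ ψ (a i) (b i) (c i) (d i)

theorem rank_pairFlattening_legTensorPow [Field R] [Finite A] [Finite B] [Fintype C] [Fintype D]
    [DecidableEq ι] (ψ : A → B → C → D → R) :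
    (pairFlattening (legTensorPow ι ψ)).rank = (pairFlattening ψ).rank ^ Fintype.card ι := by
  rw [← rank_tensorPow]
  exact rank_submatrix (tensorPow ι (pairFlattening ψ))
    (Equiv.arrowProdEquivProdArrow ι (fun _ ↦ A) (fun _ ↦ B)).symm
    (Equiv.arrowProdEquivProdArrow ι (fun _ ↦ C) (fun _ ↦ D)).symm

end

end TensorPower

section LocalAction

open scoped Kronecker

variable {A B C D R : Type*} [CommSemiring R] [Fintype A] [Fintype B] {P : Matrix A A R}
  {Q : Matrix B B R}

/-- The tensor `(P ⊗ Q ⊗ 1 ⊗ 1) ψ`. -/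
def localAct (P : Matrix A A R) (Q : Matrix B B R) (ψ : A → B → C → D → R) (a : A) (b : B)
    (c : C) (d : D) : R :=
  (P * of (fun a' b' ↦ ψ a' b' c d) * Qᵀ) a b

theorem pairFlattening_localAct (ψ : A → B → C → D → R) :
    pairFlattening (localAct P Q ψ) = (P ⊗ₖ Q) * pairFlattening ψ := by
  ext ⟨a, b⟩ ⟨c, d⟩
  simp only [pairFlattening, localAct, mul_apply, of_apply, transpose_apply, kroneckerMap_apply,
    Fintype.sum_prod_type, Finset.sum_mul]
  rw [Finset.sum_comm]
  exact Finset.sum_congr rfl fun _ _ ↦ Finset.sum_congr rfl fun _ _ ↦ mul_right_comm _ _ _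

theorem mulVec_localAct_left (hP : IsIdempotentElem P) (ψ : A → B → C → D → R) (b : B) (c : C)
    (d : D) : P *ᵥ (localAct P Q ψ · b c d) = (localAct P Q ψ · b c d) := by
  ext a
  change (P * (P * of (fun a' b' ↦ ψ a' b' c d) * Qᵀ)) a b = localAct P Q ψ a b c d
  rw [← Matrix.mul_assoc, ← Matrix.mul_assoc, hP.eq, localAct]

theorem localAct_swap (ψ : A → B → C → D → R) (a : A) (b : B) (c : C) (d : D) :
    localAct Q P (fun b a c d ↦ ψ a b c d) b a c d = localAct P Q ψ a b c d := by
  rw [localAct, ← transpose_apply (Q * _ * _), transpose_mul, transpose_mul, transpose_transpose,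
    ← Matrix.mul_assoc]
  rfl

theorem mulVec_localAct_right (hQ : IsIdempotentElem Q) (ψ : A → B → C → D → R) (a : A) (c : C)
    (d : D) : Q *ᵥ (localAct P Q ψ a · c d) = (localAct P Q ψ a · c d) := by
  simpa only [localAct_swap] using
    mulVec_localAct_left hQ (Q := P) (fun b a c d ↦ ψ a b c d) a c d

theorem rank_pairFlattening_localAct_le [StrongRankCondition R] [Fintype C] [Finite D]
    (ψ : A → B → C → D → R) :
    (pairFlattening fun b d a c ↦ localAct P Q ψ a b c d).rank ≤
      (pairFlattening fun b d a c ↦ ψ a b c d).rank := by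
  classical
  have := Fintype.ofFinite D
  have h : (pairFlattening fun b d a c ↦ localAct P Q ψ a b c d) =
      (Q ⊗ₖ (1 : Matrix D D R)) * (pairFlattening fun b d a c ↦ ψ a b c d) *
        (Pᵀ ⊗ₖ (1 : Matrix C C R)) := by
    ext ⟨b, d⟩ ⟨a, c⟩
    rw [pairFlattening, of_apply, ← localAct_swap]
    simp [localAct, pairFlattening, mul_apply, Fintype.sum_prod_type, one_apply]
  rw [h]
  exact (rank_mul_le_left _ _).trans (rank_mul_le_right _ _)

theorem localAct_smul {G : Type*} [Group G] [MulAction G A] [MulAction G B] [MulAction G C]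
    [MulAction G D] [StarRing R] [DecidableEq A] [DecidableEq B]
    (hP : P ∈ invariantAlgebra R G A) (hQ : Q ∈ invariantAlgebra R G B) {ψ : A → B → C → D → R}
    (hψ : ∀ (g : G) a b c d, ψ (g • a) (g • b) (g • c) (g • d) = ψ a b c d)
    (g : G) (a : A) (b : B) (c : C) (d : D) :
    localAct P Q ψ (g • a) (g • b) (g • c) (g • d) = localAct P Q ψ a b c d := by
  simp only [localAct, mul_apply, of_apply, transpose_apply]
  rw [← Equiv.sum_comp (MulAction.toPerm g)]
  refine Finset.sum_congr rfl fun b' _ ↦ congrArg₂ (· * ·) ?_ (hQ g b b')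
  rw [← Equiv.sum_comp (MulAction.toPerm g)]
  exact Finset.sum_congr rfl fun a' _ ↦ congrArg₂ (· * ·) (hP g a a') (hψ g a' b' c d)

end LocalAction

section RankInequality

open scoped Kronecker

variable {𝕜 ι A B C D : Type*} [RCLike 𝕜] [Fintype ι] [DecidableEq ι] [Fintype A]

theorem IsMinimalProj.rank_localAct_legTensorPow_le [Fintype B] [Fintype C] [Fintype D]
    [DecidableEq A] [DecidableEq B] {P : Matrix (ι → A) (ι → A) 𝕜} {Q : Matrix (ι → B) (ι → B) 𝕜}
    (hP : IsMinimalProj (invariantAlgebra 𝕜 (Equiv.Perm ι)ᵈᵐᵃ (ι → A)) P)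
    (hQ : IsMinimalProj (invariantAlgebra 𝕜 (Equiv.Perm ι)ᵈᵐᵃ (ι → B)) Q)
    (ψ : A → B → C → D → 𝕜) :
    (pairFlattening (localAct P Q (legTensorPow ι ψ))).rank ≤
      ((pairFlattening fun b d a c ↦ ψ a b c d).rank *
        (pairFlattening fun b c a d ↦ ψ a b c d).rank) ^ Fintype.card ι := by
  set φ := localAct P Q (legTensorPow ι ψ)
  obtain hφ | hφ := eq_or_ne φ 0
  · have hzero : pairFlattening φ = 0 := by rw [hφ]; rfl
    simp [hzero]
  have hφ_smul := localAct_smul hP.mem hQ.mem (legTensorPow_smul ψ)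
  have hP_idem := hP.isStarProjection.isIdempotentElem
  have hQ_idem := hQ.isStarProjection.isIdempotentElem
  calc
    (pairFlattening φ).rank ≤ (P ⊗ₖ Q).rank := by
      rw [pairFlattening_localAct]
      exact rank_mul_le_left _ _
    _ ≤ P.rank * Q.rank := rank_kronecker_le P Q
    _ ≤ (pairFlattening fun b d a c ↦ φ a b c d).rank *
        (pairFlattening fun b c a d ↦ φ a b c d).rank :=
      hP.rank_mul_rank_le hQ hφ_smul (mulVec_localAct_left hP_idem _)
        (mulVec_localAct_right hQ_idem _) hφ
    _ ≤ (pairFlattening (legTensorPow ι fun b d a c ↦ ψ a b c d)).rank *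
        (pairFlattening (legTensorPow ι fun b c a d ↦ ψ a b c d)).rank :=
      Nat.mul_le_mul (rank_pairFlattening_localAct_le _)
        (rank_pairFlattening_localAct_le fun a b d c ↦ legTensorPow ι ψ a b c d)
    _ = _ := by
      rw [rank_pairFlattening_legTensorPow, rank_pairFlattening_legTensorPow, mul_pow]

theorem pairFlattening_eq_sum_localAct {R α β : Type*} [CommSemiring R] [Fintype α] [Fintype β]
    [Fintype B] [DecidableEq A] [DecidableEq B] {P : α → Matrix A A R} {Q : β → Matrix B B R}
    (hP : ∑ i, P i = 1) (hQ : ∑ j, Q j = 1) (ψ : A → B → C → D → R) :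
    pairFlattening ψ = ∑ p : α × β, pairFlattening (localAct (P p.1) (Q p.2) ψ) := by
  have hone : ∑ p : α × β, P p.1 ⊗ₖ Q p.2 = 1 := by
    ext ⟨a, b⟩ ⟨a', b'⟩
    rw [← one_kronecker_one, ← hP, ← hQ]
    simp [Matrix.sum_apply, Finset.sum_mul_sum, Fintype.sum_prod_type]
  simp only [pairFlattening_localAct, ← Matrix.sum_mul, hone, Matrix.one_mul]

theorem le_of_forall_pow_le_mul_pow {r z K : ℕ} (h : ∀ n : ℕ, r ^ n ≤ (n + 1) ^ K * z ^ n) :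
    r ≤ z := by
  by_contra! hlt
  have hr : (0 : ℝ) < r := by exact_mod_cast (Nat.zero_le z).trans_lt hlt
  have hratio : (z / r : ℝ) < 1 := (div_lt_one hr).mpr (by exact_mod_cast hlt)
  have hlim := tendsto_pow_const_mul_const_pow_of_lt_one K (by positivity) hratio
  obtain ⟨n, hsmall, hn⟩ := ((hlim.eventually_lt_const (u := (1 / 2 ^ K : ℝ))
    (by positivity)).and (Filter.eventually_ge_atTop 1)).exists
  have hn' : (n + 1 : ℝ) ≤ 2 * n := by exact_mod_cast (by lia : n + 1 ≤ 2 * n)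
  have hle : (r : ℝ) ^ n ≤ (2 * n) ^ K * z ^ n := calc
    (r : ℝ) ^ n ≤ (n + 1) ^ K * z ^ n := by exact_mod_cast h n
    _ ≤ (2 * n) ^ K * z ^ n := by gcongr
  rw [div_pow, ← mul_div_assoc, div_lt_div_iff₀ (by positivity) (by positivity)] at hsmall
  rw [mul_pow] at hle
  linarith

theorem rank_pairFlattening_le [Finite B] [Fintype C] [Fintype D] (ψ : A → B → C → D → 𝕜) :
    (pairFlattening ψ).rank ≤ (pairFlattening fun b d a c ↦ ψ a b c d).rank *
      (pairFlattening fun b c a d ↦ ψ a b c d).rank := by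
  classical
  have := Fintype.ofFinite B
  refine le_of_forall_pow_le_mul_pow
    (K := Fintype.card A * Fintype.card A + Fintype.card B * Fintype.card B) fun n ↦ ?_
  obtain ⟨k, P, hk, hP, hP_min⟩ := exists_completeOrthogonalIdempotents_isMinimalProj
    (invariantAlgebra 𝕜 (Equiv.Perm (Fin n))ᵈᵐᵃ (Fin n → A))
  obtain ⟨l, Q, hl, hQ, hQ_min⟩ := exists_completeOrthogonalIdempotents_isMinimalProj
    (invariantAlgebra 𝕜 (Equiv.Perm (Fin n))ᵈᵐᵃ (Fin n → B))
  set z := (pairFlattening fun b d a c ↦ ψ a b c d).rank *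
    (pairFlattening fun b c a d ↦ ψ a b c d).rank
  have hkl : k * l ≤
      (n + 1) ^ (Fintype.card A * Fintype.card A + Fintype.card B * Fintype.card B) := by
    rw [pow_add]
    gcongr
    · simpa using hk.trans finrank_invariantAlgebra_le
    · simpa using hl.trans finrank_invariantAlgebra_le
  calc
    (pairFlattening ψ).rank ^ n = (pairFlattening (legTensorPow (Fin n) ψ)).rank := by
      rw [rank_pairFlattening_legTensorPow, Fintype.card_fin]
    _ ≤ ∑ p : Fin k × Fin l,
        (pairFlattening (localAct (P p.1) (Q p.2) (legTensorPow (Fin n) ψ))).rank := by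
      rw [pairFlattening_eq_sum_localAct hP.complete hQ.complete]
      exact rank_sum_le _ _
    _ ≤ ∑ _p : Fin k × Fin l, z ^ n := by
      refine Finset.sum_le_sum fun p _ ↦ ?_
      simpa using (hP_min p.1).rank_localAct_legTensorPow_le (hQ_min p.2) ψ
    _ = k * l * z ^ n := by simp
    _ ≤ _ := by gcongr

end RankInequality

theorem stmt7_general {𝕜 I J K L : Type*} [RCLike 𝕜] [Finite I] [Fintype J] [Fintype K]
    [Fintype L] (M : Matrix I J (Matrix K L 𝕜)) :
    (comp I J K L 𝕜 M).rank ≤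
      Module.finrank 𝕜 (Submodule.span 𝕜 (Set.range fun p : I × J ↦ M p.1 p.2)) *
        (comp I J L K 𝕜 (M.map transpose)).rank := by
  have := Fintype.ofFinite I
  let ψ (i : I) (k : K) (j : J) (l : L) : 𝕜 := M i j k l
  have hspan : (pairFlattening fun k l i j ↦ ψ i k j l).rank =
      Module.finrank 𝕜 (Submodule.span 𝕜 (Set.range fun p : I × J ↦ M p.1 p.2)) := by
    let e : Matrix K L 𝕜 ≃ₗ[𝕜] (K × L → 𝕜) := (LinearEquiv.curry 𝕜 𝕜 K L).symm
    rw [rank_eq_finrank_span_cols, ← LinearEquiv.finrank_map_eq e, Submodule.map_span,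
      ← Set.range_comp]
    rfl
  have hpt : (pairFlattening fun k j i l ↦ ψ i k j l).rank =
      (comp I J L K 𝕜 (M.map transpose)).rank := by
    rw [← rank_transpose]
    exact rank_submatrix (comp I J L K 𝕜 (M.map transpose)) (Equiv.refl _) (Equiv.prodComm _ _)
  rw [← hspan, ← hpt]
  exact rank_pairFlattening_le ψ

theorem stmt7 (m₁ n₁ m₂ n₂ s : ℕ)
    (M : Fin m₁ → Fin n₁ → Matrix (Fin m₂) (Fin n₂) ℂ)
    (hspan : Module.finrank ℂ
        ↥(Submodule.span ℂ (Set.range fun p : Fin m₁ × Fin n₁ => M p.1 p.2)) = s)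
    (hsn : s ≤ n₁)
    (hrow : ∃ (i₀ : Fin m₁) (j : Fin s → Fin n₁),
      Function.Injective j ∧ LinearIndependent ℂ (fun t => M i₀ (j t))) :
    (bipMatrix M).rank ≤ s * (bipMatrixPT M).rank := by
  rw [← hspan]
  exact stmt7_general (of fun i j ↦ M i j)
end

section
/- Let (M_{ij}), for i ∈ Fin m₁ and j ∈ Fin n₁, be an array of m₂×n₂ complex matrices whose linear span has dimension s (so the associated bipartite matrix M has Schmidt rank s), where s ≤ n₁. Suppose there exist a row index i₀ and distinct column indices j₁, …, j_{s−1} such that M_{i₀,j₁}, …, M_{i₀,j_{s−1}} are linearly independent and M_{i₀,j} = 0 for every column j ∉ {j₁, …, j_{s−1}}; and suppose furthermore there exist a row index i₁ ≠ i₀ and a column index j' with M_{i₀,j'} = 0 such that the s matrices M_{i₀,j₁}, …, M_{i₀,j_{s−1}}, M_{i₁,j'} are linearly independent. Then rank(M) ≤ s · rank(M^Γ). -/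
open Matrix

/-!
Write `s` for the dimension of the span of the blocks. A rank factorization of the partial
transpose writes the blocks as products `M i j = B j * A i` through a space `U` of dimension
`rank M^Γ`. Extend `A` and `B` to linear families `X e : L → U` and `Y f : U → K`. The maps
`Y f ∘ X e` then span a space of dimension `s`, the maps `e ↦ Y f (X e l)` span a space of dimension
`rank M`, and the claim is that the latter is at most `s * dim U`.

Choose `Y f₀` of maximal rank in its family, with kernel `U₀` and range `K₀`. Over an infinite
field, maximality forces every `Y f` to map `U₀` into `K₀`. This splits the problem into one for
the quotients `U ⧸ U₀`, `K ⧸ K₀` and one for `U₀`, `K`, with the kernel `E₀` of `e ↦ Y f₀ ∘ X e` in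
place of `E`. What neither sees consists of maps `E ⧸ E₀ → K₀`, a space of dimension `p * dim K₀`
with `p = dim (E ⧸ E₀)`. The span of the blocks loses at least `p` dimensions on passing to the
quotients, which pays for this, and induction on `dim U + dim K` concludes. Finite fields are
reduced to infinite ones by extending scalars, under which all three dimensions are unchanged.
-/

open Module

section
variable {𝕜 : Type*} [Field 𝕜]

section
variable {V W : Type*} [AddCommGroup V] [Module 𝕜 V] [AddCommGroup W] [Module 𝕜 W]

theorem finrank_map_add_finrank_inf_ker (f : V →ₗ[𝕜] W) (C : Submodule 𝕜 V)
    [FiniteDimensional 𝕜 C] :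
    finrank 𝕜 (C.map f) + finrank 𝕜 (C ⊓ LinearMap.ker f : Submodule 𝕜 V) = finrank 𝕜 C := by
  rw [← (f.domRestrict C).finrank_range_add_finrank_ker, LinearMap.range_domRestrict,
    LinearMap.ker_domRestrict, ← Submodule.map_comap_subtype, Submodule.finrank_map_subtype_eq]

theorem exists_ne_zero_injective_add_smul [Infinite 𝕜] [FiniteDimensional 𝕜 V]
    {a : V →ₗ[𝕜] W} (ha : Function.Injective a) (b : V →ₗ[𝕜] W) :
    ∃ t : 𝕜, t ≠ 0 ∧ Function.Injective (a + t • b) := by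
  obtain ⟨P, hP⟩ := a.exists_leftInverse_of_injective (LinearMap.ker_eq_bot.2 ha)
  let c : End 𝕜 V := P ∘ₗ b
  obtain ⟨μ, hμ⟩ := (c.finite_hasEigenvalue.insert 0).exists_notMem
  obtain ⟨hμ₀, hμ⟩ : μ ≠ 0 ∧ ¬ c.HasEigenvalue μ := not_or.1 hμ
  refine ⟨-μ⁻¹, by simpa using hμ₀, (injective_iff_map_eq_zero _).2 fun v hv => ?_⟩
  have hPa : P (a v) = v := LinearMap.congr_fun hP v
  have hv_eq : v = μ⁻¹ • c v := sub_eq_zero.1 <| by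
    simpa [hPa, c, sub_eq_add_neg] using congrArg P hv
  by_contra hv₀
  exact hμ (End.hasEigenvalue_of_hasEigenvector
    ⟨End.mem_eigenspace_iff.2 ((eq_inv_smul_iff₀ hμ₀).1 hv_eq).symm, hv₀⟩)

theorem map_mem_range_of_finrank_range_add_smul_le [Infinite 𝕜] [FiniteDimensional 𝕜 V]
    {y₀ y : V →ₗ[𝕜] W}
    (hmax : ∀ t : 𝕜, finrank 𝕜 (LinearMap.range (y₀ + t • y)) ≤ finrank 𝕜 (LinearMap.range y₀))
    {u : V} (hu : y₀ u = 0) : y u ∈ LinearMap.range y₀ := by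
  -- Otherwise `(k, c) ↦ k + c • y u` is injective on `range y₀ × 𝕜`; so is a perturbation of it
  -- whose image lies in that of some `y₀ + t • y`, which then has larger rank than `y₀`.
  by_contra hyu
  obtain ⟨σ, hσ⟩ := y₀.rangeRestrict.exists_rightInverse_of_surjective y₀.range_rangeRestrict
  have hy₀σ (k : LinearMap.range y₀) : y₀ (σ k) = k :=
    congrArg Subtype.val (LinearMap.congr_fun hσ k)
  let a := (LinearMap.range y₀).subtype.coprod (LinearMap.toSpanSingleton 𝕜 W (y u))
  let b : LinearMap.range y₀ × 𝕜 →ₗ[𝕜] W := (y ∘ₗ σ).coprod 0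
  have ha : Function.Injective a := by
    rw [← LinearMap.ker_eq_bot, LinearMap.ker_coprod_of_disjoint_range, Submodule.ker_subtype,
      LinearMap.ker_toSpanSingleton, Submodule.prod_bot]
    · exact fun h => hyu (h ▸ Submodule.zero_mem _)
    · rw [Submodule.range_subtype, LinearMap.range_toSpanSingleton]
      exact Submodule.disjoint_span_singleton_of_notMem hyu
  obtain ⟨t, ht, hab⟩ := exists_ne_zero_injective_add_smul ha b
  have hrange : LinearMap.range (a + t • b) ≤ LinearMap.range (y₀ + t • y) := by
    rintro _ ⟨⟨k, c⟩, rfl⟩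
    refine ⟨σ k + (t⁻¹ * c) • u, ?_⟩
    calc (y₀ + t • y) (σ k + (t⁻¹ * c) • u)
        = k + t • y (σ k) + (t * (t⁻¹ * c)) • y u := by simp [hy₀σ, hu, smul_smul, add_assoc]
      _ = (a + t • b) (k, c) := by
        rw [mul_inv_cancel_left₀ ht]
        simp [a, b, add_right_comm]
  have hdim := (Submodule.finrank_mono hrange).trans (hmax t)
  rw [LinearMap.finrank_range_of_inj hab, finrank_prod, finrank_self] at hdim
  omega

theorem finrank_le_mul_of_le_ker_of_range_le {V₀ : Submodule 𝕜 V} {W₀ : Submodule 𝕜 W}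
    [FiniteDimensional 𝕜 (V ⧸ V₀)] [FiniteDimensional 𝕜 W₀] {C : Submodule 𝕜 (V →ₗ[𝕜] W)}
    (hker : ∀ φ ∈ C, V₀ ≤ LinearMap.ker φ) (hrange : ∀ φ ∈ C, LinearMap.range φ ≤ W₀) :
    finrank 𝕜 C ≤ finrank 𝕜 (V ⧸ V₀) * finrank 𝕜 W₀ := by
  let J : ((V ⧸ V₀) →ₗ[𝕜] W₀) →ₗ[𝕜] (V →ₗ[𝕜] W) :=
    LinearMap.lcomp 𝕜 W V₀.mkQ ∘ₗ LinearMap.compRight 𝕜 W₀.subtype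
  have hC : C ≤ LinearMap.range J := fun φ hφ => by
    have hW₀ (v : V) : φ v ∈ W₀ := hrange φ hφ ⟨v, rfl⟩
    have hV₀ : V₀ ≤ LinearMap.ker (φ.codRestrict W₀ hW₀) := by
      rw [LinearMap.ker_codRestrict]
      exact hker φ hφ
    exact ⟨V₀.liftQ _ hV₀, rfl⟩
  calc finrank 𝕜 C ≤ finrank 𝕜 (LinearMap.range J) := Submodule.finrank_mono hC
    _ ≤ finrank 𝕜 ((V ⧸ V₀) →ₗ[𝕜] W₀) := J.finrank_range_le
    _ = finrank 𝕜 (V ⧸ V₀) * finrank 𝕜 W₀ := finrank_linearMap 𝕜 𝕜 _ _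

theorem finrank_le_finrank_map_add_finrank_map_add_mul
    [FiniteDimensional 𝕜 V] [FiniteDimensional 𝕜 W]
    (V₀ : Submodule 𝕜 V) (W₀ : Submodule 𝕜 W) (C : Submodule 𝕜 (V →ₗ[𝕜] W)) :
    finrank 𝕜 C ≤ finrank 𝕜 (C.map (LinearMap.compRight 𝕜 W₀.mkQ)) +
      finrank 𝕜 (C.map (LinearMap.lcomp 𝕜 W V₀.subtype)) +
      finrank 𝕜 (V ⧸ V₀) * finrank 𝕜 W₀ := by
  set q : (V →ₗ[𝕜] W) →ₗ[𝕜] (V →ₗ[𝕜] W ⧸ W₀) := LinearMap.compRight 𝕜 W₀.mkQ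
  set r : (V →ₗ[𝕜] W) →ₗ[𝕜] (V₀ →ₗ[𝕜] W) := LinearMap.lcomp 𝕜 W V₀.subtype
  have hq := finrank_map_add_finrank_inf_ker q C
  have hr := finrank_map_add_finrank_inf_ker r (C ⊓ LinearMap.ker q)
  have hmap : finrank 𝕜 ((C ⊓ LinearMap.ker q).map r) ≤ finrank 𝕜 (C.map r) :=
    Submodule.finrank_mono (Submodule.map_mono inf_le_left)
  have hrest : finrank 𝕜 (C ⊓ LinearMap.ker q ⊓ LinearMap.ker r : Submodule 𝕜 (V →ₗ[𝕜] W)) ≤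
      finrank 𝕜 (V ⧸ V₀) * finrank 𝕜 W₀ := by
    refine finrank_le_mul_of_le_ker_of_range_le (fun φ hφ v hv => ?_) ?_
    · exact LinearMap.congr_fun hφ.2 ⟨v, hv⟩
    · rintro φ hφ _ ⟨v, rfl⟩
      exact (Submodule.Quotient.mk_eq_zero _).1 (LinearMap.congr_fun hφ.1.2 v)
  omega
end

section
variable {E F L U K : Type*} [AddCommGroup E] [Module 𝕜 E] [AddCommGroup F] [Module 𝕜 F]
  [AddCommGroup L] [Module 𝕜 L] [AddCommGroup U] [Module 𝕜 U] [AddCommGroup K] [Module 𝕜 K]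

/-- The span of all compositions `Y f ∘ X e` of two linear families of maps. For the families
factoring an array of blocks, `compSpan X Y` corresponds to the span of the blocks and
`compSpan X.flip Y` to the column space of the block matrix. -/
def compSpan (X : E →ₗ[𝕜] L →ₗ[𝕜] U) (Y : F →ₗ[𝕜] U →ₗ[𝕜] K) : Submodule 𝕜 (L →ₗ[𝕜] K) :=
  Submodule.span 𝕜 (Set.range fun p : E × F => Y p.2 ∘ₗ X p.1)

/-- The family of maps `U ⧸ U₀ → K ⧸ K₀` induced by a linear family of maps sending `U₀` into `K₀`:
`Submodule.mapQ`, linearly in the parameter. -/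
def mapQFamily (Y : F →ₗ[𝕜] U →ₗ[𝕜] K) {U₀ : Submodule 𝕜 U} {K₀ : Submodule 𝕜 K}
    (h : ∀ f, U₀ ≤ K₀.comap (Y f)) : F →ₗ[𝕜] U ⧸ U₀ →ₗ[𝕜] K ⧸ K₀ :=
  U₀.mapQLinear K₀ ∘ₗ Y.codRestrict (U₀.compatibleMaps K₀) h

/-- The restriction of a linear family of maps to the parameters in `E₀`, with codomain shrunk to a
subspace `U₀` that contains the values at these parameters. -/
def restrictFamily (X : E →ₗ[𝕜] L →ₗ[𝕜] U) {E₀ : Submodule 𝕜 E} {U₀ : Submodule 𝕜 U}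
    (h : ∀ e ∈ E₀, ∀ l, X e l ∈ U₀) : E₀ →ₗ[𝕜] L →ₗ[𝕜] U₀ where
  toFun e := (X e).codRestrict U₀ (h e e.2)
  map_add' _ _ := by ext; simp
  map_smul' _ _ := by ext; simp

variable {X : E →ₗ[𝕜] L →ₗ[𝕜] U} {Y : F →ₗ[𝕜] U →ₗ[𝕜] K}

theorem comp_mem_compSpan (f : F) (e : E) : Y f ∘ₗ X e ∈ compSpan X Y :=
  Submodule.subset_span ⟨(e, f), rfl⟩

theorem compSpan_le {S : Submodule 𝕜 (L →ₗ[𝕜] K)} :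
    compSpan X Y ≤ S ↔ ∀ f e, Y f ∘ₗ X e ∈ S := by
  rw [compSpan, Submodule.span_le, Set.range_subset_iff, Prod.forall, forall_comm]
  rfl

theorem compSpan_zero : compSpan X (0 : F →ₗ[𝕜] U →ₗ[𝕜] K) = ⊥ :=
  eq_bot_iff.2 (compSpan_le.2 fun _ _ => LinearMap.zero_comp _)

theorem compSpan_linearCombination {I J : Type*} [Fintype I] [Fintype J]
    (a : I → L →ₗ[𝕜] U) (b : J → U →ₗ[𝕜] K) :
    compSpan (Fintype.linearCombination 𝕜 a) (Fintype.linearCombination 𝕜 b) =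
      Submodule.span 𝕜 (Set.range fun p : I × J => b p.2 ∘ₗ a p.1) := by
  classical
  refine le_antisymm (compSpan_le.2 fun f e => ?_) (Submodule.span_le.2 ?_)
  · have hfe : Fintype.linearCombination 𝕜 b f ∘ₗ Fintype.linearCombination 𝕜 a e =
        ∑ j, ∑ i, f j • e i • (b j ∘ₗ a i) := by
      ext l
      simp [Fintype.linearCombination_apply, Finset.smul_sum]
    rw [hfe]
    exact sum_mem fun j _ => sum_mem fun i _ => Submodule.smul_mem _ _ <|
      Submodule.smul_mem _ _ (Submodule.subset_span ⟨(i, j), rfl⟩)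
  · rintro _ ⟨⟨i, j⟩, rfl⟩
    simpa using comp_mem_compSpan (X := Fintype.linearCombination 𝕜 a)
      (Y := Fintype.linearCombination 𝕜 b) (Pi.single j 1) (Pi.single i 1)

theorem map_compSpan {U' L' K' : Type*} [AddCommGroup U'] [Module 𝕜 U'] [AddCommGroup L']
    [Module 𝕜 L'] [AddCommGroup K'] [Module 𝕜 K'] {X' : E →ₗ[𝕜] L' →ₗ[𝕜] U'}
    {Y' : F →ₗ[𝕜] U' →ₗ[𝕜] K'} {T : (L →ₗ[𝕜] K) →ₗ[𝕜] (L' →ₗ[𝕜] K')}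
    (hT : ∀ f e, T (Y f ∘ₗ X e) = Y' f ∘ₗ X' e) : (compSpan X Y).map T = compSpan X' Y' := by
  rw [compSpan, compSpan, Submodule.map_span, ← Set.range_comp]
  exact congrArg (fun g => Submodule.span 𝕜 (Set.range g)) (funext fun p => hT p.2 p.1)

theorem finrank_compSpan_flip_le_add_add_mul [FiniteDimensional 𝕜 E] [FiniteDimensional 𝕜 K]
    {E₀ : Submodule 𝕜 E} {U₀ : Submodule 𝕜 U} {K₀ : Submodule 𝕜 K}
    (hX : ∀ e ∈ E₀, ∀ l, X e l ∈ U₀) (hY : ∀ f, U₀ ≤ K₀.comap (Y f)) :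
    finrank 𝕜 (compSpan X.flip Y) ≤
      finrank 𝕜 (compSpan (X.compr₂ U₀.mkQ).flip (mapQFamily Y hY)) +
      finrank 𝕜 (compSpan (restrictFamily X hX).flip (Y.domRestrict₂ U₀)) +
      finrank 𝕜 (E ⧸ E₀) * finrank 𝕜 K₀ := by
  refine (finrank_le_finrank_map_add_finrank_map_add_mul E₀ K₀ (compSpan X.flip Y)).trans_eq ?_
  rw [map_compSpan (X' := (X.compr₂ U₀.mkQ).flip) (Y' := mapQFamily Y hY) fun _ _ => rfl,
    map_compSpan (X' := (restrictFamily X hX).flip) (Y' := Y.domRestrict₂ U₀) fun _ _ => rfl]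

theorem compSpan_restrictFamily_le {E₀ : Submodule 𝕜 E} {U₀ : Submodule 𝕜 U}
    (hX : ∀ e ∈ E₀, ∀ l, X e l ∈ U₀) :
    compSpan (restrictFamily X hX) (Y.domRestrict₂ U₀) ≤ compSpan X Y :=
  compSpan_le.2 fun f e => comp_mem_compSpan (X := X) (Y := Y) f e

theorem finrank_compSpan_mapQFamily_add_finrank_range_le [FiniteDimensional 𝕜 L]
    [FiniteDimensional 𝕜 K] {f₀ : F} {U₀ : Submodule 𝕜 U}
    (hY : ∀ f, U₀ ≤ (LinearMap.range (Y f₀)).comap (Y f)) :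
    finrank 𝕜 (compSpan (X.compr₂ U₀.mkQ) (mapQFamily Y hY)) +
      finrank 𝕜 (LinearMap.range (X.compr₂ (Y f₀))) ≤ finrank 𝕜 (compSpan X Y) := by
  set q : (L →ₗ[𝕜] K) →ₗ[𝕜] (L →ₗ[𝕜] K ⧸ LinearMap.range (Y f₀)) :=
    LinearMap.compRight 𝕜 (LinearMap.range (Y f₀)).mkQ
  have hker : LinearMap.range (X.compr₂ (Y f₀)) ≤ compSpan X Y ⊓ LinearMap.ker q := by
    rintro _ ⟨e, rfl⟩
    refine ⟨comp_mem_compSpan f₀ e, LinearMap.ext fun l => ?_⟩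
    exact (Submodule.Quotient.mk_eq_zero _).2 ⟨X e l, rfl⟩
  rw [← finrank_map_add_finrank_inf_ker q (compSpan X Y),
    map_compSpan (X' := X.compr₂ U₀.mkQ) (Y' := mapQFamily Y hY) fun _ _ => rfl]
  exact Nat.add_le_add_left (Submodule.finrank_mono hker) _

theorem exists_forall_finrank_range_le [FiniteDimensional 𝕜 K] (Y : F →ₗ[𝕜] U →ₗ[𝕜] K) :
    ∃ f₀, ∀ f, finrank 𝕜 (LinearMap.range (Y f)) ≤ finrank 𝕜 (LinearMap.range (Y f₀)) := by
  have hbdd : BddAbove (Set.range fun f => finrank 𝕜 (LinearMap.range (Y f))) :=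
    ⟨finrank 𝕜 K, Set.forall_mem_range.2 fun f => Submodule.finrank_le _⟩
  obtain ⟨_, ⟨f₀, rfl⟩, hmax⟩ := hbdd.exists_isGreatest_of_nonempty (Set.range_nonempty _)
  exact ⟨f₀, Set.forall_mem_range.1 hmax⟩

theorem ker_le_comap_range_of_forall_finrank_range_le [Infinite 𝕜] [FiniteDimensional 𝕜 U] {f₀ : F}
    (hmax : ∀ f, finrank 𝕜 (LinearMap.range (Y f)) ≤ finrank 𝕜 (LinearMap.range (Y f₀))) (f : F) :
    LinearMap.ker (Y f₀) ≤ (LinearMap.range (Y f₀)).comap (Y f) := fun u hu => by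
  refine map_mem_range_of_finrank_range_add_smul_le (fun t => ?_) hu
  rw [← map_smul, ← map_add]
  exact hmax _

theorem finrank_compSpan_flip_le [Infinite 𝕜] [FiniteDimensional 𝕜 E] [FiniteDimensional 𝕜 L]
    [FiniteDimensional 𝕜 U] [FiniteDimensional 𝕜 K]
    (X : E →ₗ[𝕜] L →ₗ[𝕜] U) (Y : F →ₗ[𝕜] U →ₗ[𝕜] K) :
    finrank 𝕜 (compSpan X.flip Y) ≤ finrank 𝕜 (compSpan X Y) * finrank 𝕜 U := by
  induction hn : finrank 𝕜 U + finrank 𝕜 K using Nat.strong_induction_on generalizing E U K with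
  | _ n ih =>
  obtain ⟨f₀, hmax⟩ := exists_forall_finrank_range_le Y
  rcases eq_or_ne (finrank 𝕜 (LinearMap.range (Y f₀))) 0 with hrank | hrank
  · have hY : Y = 0 := LinearMap.ext fun f => by
      simpa [hrank, LinearMap.range_eq_bot] using hmax f
    rw [hY, compSpan_zero, finrank_bot]
    exact Nat.zero_le _
  set U₀ := LinearMap.ker (Y f₀)
  set K₀ := LinearMap.range (Y f₀)
  have hY (f : F) : U₀ ≤ K₀.comap (Y f) := ker_le_comap_range_of_forall_finrank_range_le hmax f
  have hX : ∀ e ∈ LinearMap.ker (X.compr₂ (Y f₀)), ∀ l, X e l ∈ U₀ := fun e he l =>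
    LinearMap.congr_fun (LinearMap.mem_ker.1 he) l
  have hU : finrank 𝕜 K₀ + finrank 𝕜 U₀ = finrank 𝕜 U := (Y f₀).finrank_range_add_finrank_ker
  have hUq : finrank 𝕜 (U ⧸ U₀) = finrank 𝕜 K₀ := (Y f₀).quotKerEquivRange.finrank_eq
  have hKq := K₀.finrank_quotient_add_finrank
  have hsplit := finrank_compSpan_flip_le_add_add_mul hX hY
  rw [(X.compr₂ (Y f₀)).quotKerEquivRange.finrank_eq] at hsplit
  have hquot := finrank_compSpan_mapQFamily_add_finrank_range_le (X := X) hY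
  have hsub := Submodule.finrank_mono (compSpan_restrictFamily_le (Y := Y) hX)
  have ihquot := ih _ (by omega) (X.compr₂ U₀.mkQ) (mapQFamily Y hY) rfl
  have ihsub := ih _ (by omega) (restrictFamily X hX) (Y.domRestrict₂ U₀) rfl
  rw [hUq] at ihquot
  calc finrank 𝕜 (compSpan X.flip Y)
      ≤ finrank 𝕜 (compSpan (X.compr₂ U₀.mkQ) (mapQFamily Y hY)) * finrank 𝕜 K₀ +
          finrank 𝕜 (compSpan (restrictFamily X hX) (Y.domRestrict₂ U₀)) * finrank 𝕜 U₀ +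
          finrank 𝕜 (LinearMap.range (X.compr₂ (Y f₀))) * finrank 𝕜 K₀ := by omega
    _ = (finrank 𝕜 (compSpan (X.compr₂ U₀.mkQ) (mapQFamily Y hY)) +
            finrank 𝕜 (LinearMap.range (X.compr₂ (Y f₀)))) * finrank 𝕜 K₀ +
          finrank 𝕜 (compSpan (restrictFamily X hX) (Y.domRestrict₂ U₀)) * finrank 𝕜 U₀ := by
        ring
    _ ≤ finrank 𝕜 (compSpan X Y) * finrank 𝕜 K₀ + finrank 𝕜 (compSpan X Y) * finrank 𝕜 U₀ := by
        gcongr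
    _ = finrank 𝕜 (compSpan X Y) * finrank 𝕜 U := by rw [← mul_add, hU]

end
end

section
variable {𝕜 : Type*} [Field 𝕜]
variable {I J K L U m n : Type*}

theorem exists_rank_factorization_s9 [Fintype n] (N : Matrix m n 𝕜) :
    ∃ (P : Matrix m (Fin N.rank) 𝕜) (Q : Matrix (Fin N.rank) n 𝕜), P * Q = N := by
  classical
  let b := finBasis 𝕜 (LinearMap.range N.mulVecLin)
  let col (j : n) : LinearMap.range N.mulVecLin := ⟨N.col j, Pi.single j 1, N.mulVec_single_one j⟩
  refine ⟨of fun i u => (b u : m → 𝕜) i, of fun u j => b.repr (col j) u, ?_⟩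
  ext i j
  calc (of (fun i u => (b u : m → 𝕜) i) * of fun u j => b.repr (col j) u) i j
      = (∑ u, b.repr (col j) u • b u : LinearMap.range N.mulVecLin).1 i := by
        simp only [mul_apply, of_apply, AddSubmonoidClass.coe_finsetSum, Submodule.coe_smul,
          Finset.sum_apply, Pi.smul_apply, smul_eq_mul, mul_comm]
    _ = N i j := congrArg (fun v => v.1 i) (b.sum_repr (col j))

theorem rank_comp_le_of_mul_eq [Infinite 𝕜] [Finite I] [Fintype J] [Finite K] [Fintype L]
    [Fintype U] {M : Matrix I J (Matrix K L 𝕜)} {A : I → Matrix U L 𝕜} {B : J → Matrix K U 𝕜}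
    (hM : ∀ i j, B j * A i = M i j) :
    (comp I J K L 𝕜 M).rank ≤
      finrank 𝕜 (Submodule.span 𝕜 (Set.range fun p : I × J => M p.1 p.2)) *
        Fintype.card U := by
  classical
  cases nonempty_fintype I
  cases nonempty_fintype K
  let X := Fintype.linearCombination 𝕜 fun i => toLin' (A i)
  let Y := Fintype.linearCombination 𝕜 fun j => toLin' (B j)
  have hblocks : finrank 𝕜 (compSpan X Y) =
      finrank 𝕜 (Submodule.span 𝕜 (Set.range fun p : I × J => M p.1 p.2)) := by
    have htoLin : (fun p : I × J => toLin' (B p.2) ∘ₗ toLin' (A p.1)) =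
        toLin' ∘ fun p => M p.1 p.2 :=
      funext fun p => by rw [Function.comp_apply, ← hM, toLin'_mul]
    rw [compSpan_linearCombination, htoLin, Set.range_comp, ← LinearEquiv.coe_coe,
      ← Submodule.map_span, toLin'.finrank_map_eq]
  let eval : ((I → 𝕜) →ₗ[𝕜] (K → 𝕜)) →ₗ[𝕜] (I × K → 𝕜) :=
    LinearMap.pi fun p => LinearMap.proj p.2 ∘ₗ LinearMap.applyₗ (Pi.single p.1 1)
  have hcols : Submodule.span 𝕜 (Set.range (comp I J K L 𝕜 M).col) ≤
      (compSpan X.flip Y).map eval := by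
    rw [Submodule.span_le]
    rintro _ ⟨⟨j, l⟩, rfl⟩
    refine ⟨_, comp_mem_compSpan (Pi.single j 1) (Pi.single l 1), ?_⟩
    ext ⟨i, k⟩
    simp [eval, X, Y, comp_apply, ← hM, mul_apply, mulVec, dotProduct]
  calc (comp I J K L 𝕜 M).rank
      ≤ finrank 𝕜 ((compSpan X.flip Y).map eval) := by
        rw [rank_eq_finrank_span_cols]
        exact Submodule.finrank_mono hcols
    _ ≤ finrank 𝕜 (compSpan X.flip Y) := Submodule.finrank_map_le _ _
    _ ≤ finrank 𝕜 (compSpan X Y) * finrank 𝕜 (U → 𝕜) := finrank_compSpan_flip_le X Y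
    _ = _ := by rw [hblocks, finrank_pi]

theorem finrank_span_range_algebraMap_comp {ι σ : Type*} [Finite σ] (𝕂 : Type*)
    [Field 𝕂] [Algebra 𝕜 𝕂] (v : ι → σ → 𝕜) :
    finrank 𝕂 (Submodule.span 𝕂 (Set.range fun i => algebraMap 𝕜 𝕂 ∘ v i)) =
      finrank 𝕜 (Submodule.span 𝕜 (Set.range v)) := by
  obtain ⟨κ, a, -, hspan, hli⟩ := exists_linearIndependent' 𝕜 v
  have : Finite κ := hli.finite
  cases nonempty_fintype κ
  have hspan' : Submodule.span 𝕂 (Set.range fun i => algebraMap 𝕜 𝕂 ∘ v i) =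
      Submodule.span 𝕂 (Set.range fun k => algebraMap 𝕜 𝕂 ∘ (v ∘ a) k) := by
    refine le_antisymm (Submodule.span_le.2 ?_) (Submodule.span_mono ?_)
    · rintro _ ⟨i, rfl⟩
      have hi : v i ∈ Submodule.span 𝕜 (Set.range (v ∘ a)) := hspan ▸ Submodule.subset_span ⟨i, rfl⟩
      obtain ⟨c, hc⟩ := (Submodule.mem_span_range_iff_exists_fun 𝕜).1 hi
      refine (Submodule.mem_span_range_iff_exists_fun 𝕂).2 ⟨fun k => algebraMap 𝕜 𝕂 (c k), ?_⟩
      ext x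
      simp [← hc, Algebra.smul_def]
    · rintro _ ⟨k, rfl⟩
      exact ⟨a k, rfl⟩
  rw [hspan', ← hspan, finrank_span_eq_card hli,
    finrank_span_eq_card (linearIndependent_algebraMap_comp_iff.2 hli)]

theorem rank_map_algebraMap [Finite m] [Fintype n] (𝕂 : Type*) [Field 𝕂] [Algebra 𝕜 𝕂]
    (N : Matrix m n 𝕜) : (N.map (algebraMap 𝕜 𝕂)).rank = N.rank := by
  rw [rank_eq_finrank_span_cols, rank_eq_finrank_span_cols]
  exact finrank_span_range_algebraMap_comp 𝕂 N.col

theorem finrank_span_range_uncurry {ι : Type*} (v : ι → Matrix K L 𝕜) :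
    finrank 𝕜 (Submodule.span 𝕜 (Set.range fun i (p : K × L) => v i p.1 p.2)) =
      finrank 𝕜 (Submodule.span 𝕜 (Set.range v)) := by
  rw [← ((ofLinearEquiv 𝕜).symm.trans (LinearEquiv.curry 𝕜 𝕜 K L).symm).finrank_map_eq
    (Submodule.span 𝕜 (Set.range v)), Submodule.map_span, ← Set.range_comp]
  rfl

theorem finrank_span_range_map_algebraMap {ι : Type*} [Finite K] [Finite L] (𝕂 : Type*)
    [Field 𝕂] [Algebra 𝕜 𝕂] (v : ι → Matrix K L 𝕜) :
    finrank 𝕂 (Submodule.span 𝕂 (Set.range fun i => (v i).map (algebraMap 𝕜 𝕂))) =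
      finrank 𝕜 (Submodule.span 𝕜 (Set.range v)) := by
  rw [← finrank_span_range_uncurry, ← finrank_span_range_uncurry v,
    ← finrank_span_range_algebraMap_comp 𝕂 fun i (p : K × L) => v i p.1 p.2]
  rfl

theorem rank_comp_le_of_infinite [Infinite 𝕜] [Finite I] [Fintype J] [Fintype K] [Fintype L]
    (M : Matrix I J (Matrix K L 𝕜)) :
    (comp I J K L 𝕜 M).rank ≤
      finrank 𝕜 (Submodule.span 𝕜 (Set.range fun p : I × J => M p.1 p.2)) *
        (comp I J L K 𝕜 (M.map (·ᵀ))).rank := by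
  obtain ⟨P, Q, hPQ⟩ := exists_rank_factorization_s9 (comp I J L K 𝕜 (M.map (·ᵀ)))
  let A (i : I) : Matrix _ L 𝕜 := of fun u l => P (i, l) u
  let B (j : J) : Matrix K _ 𝕜 := of fun k u => Q u (j, k)
  have hM (i : I) (j : J) : B j * A i = M i j := by
    ext k l
    simpa [A, B, mul_apply, mul_comm] using congrFun₂ hPQ (i, l) (j, k)
  simpa only [Fintype.card_fin] using rank_comp_le_of_mul_eq hM

theorem stmt9_general [Finite I] [Fintype J] [Fintype K] [Fintype L]
    (M : Matrix I J (Matrix K L 𝕜)) :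
    (comp I J K L 𝕜 M).rank ≤
      finrank 𝕜 (Submodule.span 𝕜 (Set.range fun p : I × J => M p.1 p.2)) *
        (comp I J L K 𝕜 (M.map (·ᵀ))).rank := by
  let 𝕂 := AlgebraicClosure 𝕜
  have h := rank_comp_le_of_infinite (M.map fun B => B.map (algebraMap 𝕜 𝕂))
  have hspan := finrank_span_range_map_algebraMap 𝕂 fun p : I × J => M p.1 p.2
  rw [← rank_map_algebraMap 𝕂, ← rank_map_algebraMap 𝕂 (comp I J L K 𝕜 _), ← hspan]
  exact h
end

theorem stmt9 (m₁ n₁ m₂ n₂ s : ℕ)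
    (M : Fin m₁ → Fin n₁ → Matrix (Fin m₂) (Fin n₂) ℂ)
    (hspan : Module.finrank ℂ
        ↥(Submodule.span ℂ (Set.range fun p : Fin m₁ × Fin n₁ => M p.1 p.2)) = s)
    (hsn : s ≤ n₁)
    (hrow : ∃ (i₀ : Fin m₁) (j : Fin (s - 1) → Fin n₁),
      Function.Injective j ∧ LinearIndependent ℂ (fun t => M i₀ (j t)) ∧
      (∀ jc : Fin n₁, jc ∉ Set.range j → M i₀ jc = 0) ∧
      ∃ (i₁ : Fin m₁) (j' : Fin n₁), i₁ ≠ i₀ ∧ M i₀ j' = 0 ∧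
        LinearIndependent ℂ (Fin.snoc (fun t : Fin (s - 1) => M i₀ (j t)) (M i₁ j'))) :
    (bipMatrix M).rank ≤ s * (bipMatrixPT M).rank :=
  hspan ▸ stmt9_general (of M)
end
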